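/- The only integer solutions of the equation x⁴ + x*y + 2*y³ = 0 are (x, y) = (0, 0) and (x, y) = (-1, -1). -/

import Mathlib

/-!
Dividing a nonzero solution `(x, y)` by its gcd `d = gcd(x, y)`, the equation forces enough
divisibility to parametrize it by fifth powers, and it becomes `X⁵ + Y⁵ = 2ˢZ⁵` with coprime `X`,
`Y` and `s = 1` or `s = 3`. For `5 ∤ s` every such solution has `Z = 0` or `X = Y`, which is proved
in the manner of Kummer in the principal ideal domain `ℤ[ζ]`, `ζ⁵ = 1`, with `π = ζ - 1` the prime
above `5`. Two facts drive the argument: a unit that is congruent to an integer modulo `π³` is a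
fifth power, as the units are generated up to fifth powers by `ζ` and `ζ² + ζ³`; and `2ˢ` is not a
fifth power modulo `25`.

If `5 ∣ Z`, the factors of `X⁵ + Y⁵` share exactly the prime `π`, and a descent on the power of `π`
in `Z` gives `Z = 0`. If `5 ∤ Z`, the powers of `2` lie in `X + Y`, so `X + ζY` is a unit
times a fifth power, hence real modulo `5` up to a power of `ζ`, and `5` divides `X`, `Y` or
`X - Y`. The first two are excluded modulo `25`. In the last case `25 ∣ 2ˢ⁻¹Z⁵ - Y⁵` gives
`5 ∣ s - 1`, so that `s` can be taken to be `1`, and a descent on the power of `π` in `X - Y` gives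
`X = Y`.
-/

open Polynomial NumberField

namespace QuinticCyclotomic

instance : Fact (Nat.Prime 5) := ⟨Nat.prime_five⟩

section PrimeCyclotomic

variable {R : Type*} [CommRing R] [IsDomain R] {p : ℕ} [hp : Fact p.Prime] {ζ : R}

theorem pow_mem_nthRootsFinset (hζ : IsPrimitiveRoot ζ p) (k : ℕ) :
    ζ ^ k ∈ nthRootsFinset p 1 := by
  rw [mem_nthRootsFinset hp.out.pos, ← pow_mul, mul_comm, pow_mul, hζ.pow_eq_one, one_pow]

theorem sub_one_dvd_sub_mul (hζ : IsPrimitiveRoot ζ p) {η a b : R} (hη : η ∈ nthRootsFinset p 1)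
    (h : ζ - 1 ∣ a - b) : ζ - 1 ∣ a - η * b := by
  have hη' : ζ - 1 ∣ 1 - η :=
    hζ.sub_one_dvd_sub hp.out (one_mem_nthRootsFinset hp.out.pos) hη
  convert dvd_add h (hη'.mul_right b) using 1
  ring

theorem exists_add_mul_eq_sub_one_mul (hζ : IsPrimitiveRoot ζ p) {a b : R} (h : ζ - 1 ∣ a + b) :
    ∃ f : R → R, ∀ η ∈ nthRootsFinset p 1, a + η * b = (ζ - 1) * f η := by
  have hdvd : ∀ η ∈ nthRootsFinset p (1 : R), ζ - 1 ∣ a + η * b := fun η hη ↦ by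
    simpa using sub_one_dvd_sub_mul hζ hη (a := a) (b := -b) (by simpa using h)
  choose! f hf using hdvd
  exact ⟨f, hf⟩

theorem sub_one_pow_dvd_pow_sub_pow (hζ : IsPrimitiveRoot ζ p) {m : ℕ} {a b : R}
    (h : (ζ - 1) ^ (m + 1) ∣ a - b) : (ζ - 1) ^ (m + p) ∣ a ^ p - b ^ p := by
  classical
  have hab : ζ - 1 ∣ a - b := (dvd_pow_self _ m.succ_ne_zero).trans h
  have hone : (1 : R) ∈ nthRootsFinset p 1 := one_mem_nthRootsFinset hp.out.pos
  have hrest : (ζ - 1) ^ (p - 1) ∣ ∏ η ∈ (nthRootsFinset p 1).erase 1, (a - η * b) := by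
    have hcard : ((nthRootsFinset p (1 : R)).erase 1).card = p - 1 := by
      rw [Finset.card_erase_of_mem hone, hζ.card_nthRootsFinset]
    rw [← hcard, ← Finset.prod_const]
    exact Finset.prod_dvd_prod_of_dvd _ _ fun η hη ↦
      sub_one_dvd_sub_mul hζ (Finset.mem_of_mem_erase hη) hab
  rw [hζ.pow_sub_pow_eq_prod_sub_mul _ _ hp.out.pos, ← Finset.mul_prod_erase _ _ hone, one_mul,
    show m + p = (m + 1) + (p - 1) by have := hp.out.pos; omega, pow_add]
  exact mul_dvd_mul h hrest

theorem sub_one_dvd_sub_of_dvd_pow_sub_pow (hζ : IsPrimitiveRoot ζ p) (hprime : Prime (ζ - 1))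
    {a b : R} (h : ζ - 1 ∣ a ^ p - b ^ p) : ζ - 1 ∣ a - b := by
  rw [hζ.pow_sub_pow_eq_prod_sub_mul _ _ hp.out.pos, hprime.dvd_finsetProd_iff] at h
  obtain ⟨η, hη, hdvd⟩ := h
  have hη' : ζ - 1 ∣ η - 1 :=
    hζ.sub_one_dvd_sub hp.out hη (one_mem_nthRootsFinset hp.out.pos)
  convert dvd_add hdvd (hη'.mul_right b) using 1
  ring

theorem isUnit_one_add_of_mem_nthRootsFinset (hp2 : p ≠ 2) {η : R} (hη : η ∈ nthRootsFinset p 1)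
    (hη1 : η ≠ 1) : IsUnit (1 + η) := by
  have hη' := isPrimitiveRoot_of_mem_nthRootsFinset hp.out hη hη1
  simpa [Finset.sum_range_succ] using hη'.geom_sum_isUnit hp.out.two_le
    ((Nat.coprime_primes Nat.prime_two hp.out).2 hp2.symm)

end PrimeCyclotomic

section PrimeCyclotomicField

variable {K : Type*} [Field K]

theorem isPrimitiveRoot_coe {n : ℕ} {ζ : 𝓞 K} (hζ : IsPrimitiveRoot ζ n) :
    IsPrimitiveRoot (ζ : K) n :=
  hζ.map_of_injective (f := algebraMap (𝓞 K) K) RingOfIntegers.coe_injective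

variable {p : ℕ} [hp : Fact p.Prime] {ζ : 𝓞 K}

theorem associated_sub_one_pow (hζ : IsPrimitiveRoot ζ p) :
    Associated ((ζ - 1) ^ (p - 1)) (p : 𝓞 K) :=
  IsCyclotomicExtension.Rat.associated_zeta_sub_one_pow_prime p (isPrimitiveRoot_coe hζ)

variable [NumberField K]

theorem prime_natCast_of_orderOf_eq_totient {m : ℕ} [NeZero m] [IsCyclotomicExtension {m} ℚ K]
    (hpm : ¬ p ∣ m) (hord : orderOf (p : ZMod m) = m.totient) : Prime (p : 𝓞 K) := by
  have hnorm : Ideal.absNorm (Ideal.span {(p : 𝓞 K)}) = p ^ m.totient := by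
    rw [Ideal.absNorm_span_natCast, RingOfIntegers.rank,
      IsCyclotomicExtension.Rat.finrank m K]
  have hpZ : (Ideal.span {(p : ℤ)}).IsMaximal :=
    PrincipalIdealRing.isMaximal_of_irreducible (Nat.prime_iff_prime_int.1 hp.out).irreducible
  obtain ⟨P, hP, hle⟩ := Ideal.exists_le_maximal (Ideal.span {(p : 𝓞 K)}) fun htop ↦ by
    rw [htop, Ideal.absNorm_top] at hnorm
    exact (one_lt_pow₀ hp.out.one_lt (Nat.totient_pos.2 (NeZero.pos m)).ne').ne hnorm
  have hover : P.LiesOver (Ideal.span {(p : ℤ)}) := by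
    refine ⟨hpZ.eq_of_le (hP.isPrime.comap (algebraMap ℤ (𝓞 K))).ne_top ?_⟩
    rw [Ideal.span_singleton_le_iff_mem, Ideal.mem_comap]
    simpa using (Ideal.span_singleton_le_iff_mem _).1 hle
  have hnormP : Ideal.absNorm P = p ^ m.totient := by
    rw [Ideal.absNorm_eq_pow_inertiaDeg' P hp.out, Ideal.inertiaDeg'_eq_inertiaDeg,
      IsCyclotomicExtension.Rat.inertiaDeg_eq_of_not_dvd p K P hpm, hord]
  obtain ⟨J, hJ⟩ := Ideal.dvd_iff_le.2 hle
  have hJtop : J = ⊤ := by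
    rw [hJ, map_mul, hnormP] at hnorm
    exact Ideal.absNorm_eq_one_iff.1
      (Nat.eq_of_mul_eq_mul_left (pow_pos hp.out.pos _) (hnorm.trans (mul_one _).symm))
  rw [← Ideal.span_singleton_prime (Nat.cast_ne_zero.2 hp.out.ne_zero), hJ, hJtop,
    Ideal.mul_top]
  exact hP.isPrime

variable [IsCyclotomicExtension {p} ℚ K]

theorem prime_sub_one (hζ : IsPrimitiveRoot ζ p) : Prime (ζ - 1) :=
  (isPrimitiveRoot_coe hζ).zeta_sub_one_prime'

theorem sub_one_dvd_intCast_iff (hζ : IsPrimitiveRoot ζ p) {n : ℤ} :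
    ζ - 1 ∣ (n : 𝓞 K) ↔ (p : ℤ) ∣ n :=
  IsCyclotomicExtension.Rat.zeta_sub_one_dvd_intCast_iff' p (isPrimitiveRoot_coe hζ)

theorem exists_intCast_sub_one_dvd_sub (hζ : IsPrimitiveRoot ζ p) (x : 𝓞 K) :
    ∃ n : ℤ, ζ - 1 ∣ x - n := by
  have hx : x ∈ Algebra.adjoin ℤ {ζ} := by
    have htop := IsCyclotomicExtension.Rat.adjoin_singleton_eq_top (isPrimitiveRoot_coe hζ)
    exact htop ▸ Algebra.mem_top
  rw [Algebra.adjoin_singleton_eq_range_aeval] at hx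
  obtain ⟨f, rfl⟩ := hx
  refine ⟨f.eval 1, ?_⟩
  simpa [aeval_def, ← eval_map] using sub_dvd_eval_sub ζ 1 (f.map (algebraMap ℤ (𝓞 K)))

theorem sq_dvd_of_sub_one_pow_dvd_intCast (hζ : IsPrimitiveRoot ζ p) {n : ℤ}
    (h : (ζ - 1) ^ p ∣ (n : 𝓞 K)) : (p : ℤ) ^ 2 ∣ n := by
  obtain ⟨m, rfl⟩ := (sub_one_dvd_intCast_iff hζ).1 ((dvd_pow_self _ hp.out.ne_zero).trans h)
  have hm : ζ - 1 ∣ (m : 𝓞 K) := by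
    obtain ⟨u, hu⟩ := associated_sub_one_pow hζ
    rw [Int.cast_mul, Int.cast_natCast, ← hu, mul_assoc, ← pow_sub_one_mul hp.out.ne_zero] at h
    have := (mul_dvd_mul_iff_left (pow_ne_zero _ (prime_sub_one hζ).ne_zero)).1 h
    exact u.isUnit.dvd_mul_left.1 this
  rw [sq]
  exact mul_dvd_mul_left _ ((sub_one_dvd_intCast_iff hζ).1 hm)

theorem exists_intCast_sub_one_pow_dvd_pow_sub (hζ : IsPrimitiveRoot ζ p) (x : 𝓞 K) :
    ∃ n : ℤ, (ζ - 1) ^ p ∣ x ^ p - n ^ p ∧ ζ - 1 ∣ x - n := by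
  obtain ⟨n, hn⟩ := exists_intCast_sub_one_dvd_sub hζ x
  exact ⟨n, by simpa using sub_one_pow_dvd_pow_sub_pow hζ (m := 0) (by simpa using hn), hn⟩

theorem exists_sub_one_sq_dvd_sub_pow_mul (hζ : IsPrimitiveRoot ζ p) {a b : 𝓞 K}
    (hb : ¬ ζ - 1 ∣ b) (h : ζ - 1 ∣ a ^ p - b ^ p) : ∃ k : ℕ, (ζ - 1) ^ 2 ∣ a - ζ ^ k * b := by
  obtain ⟨c, hc⟩ := sub_one_dvd_sub_of_dvd_pow_sub_pow hζ (prime_sub_one hζ) h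
  obtain ⟨m, hm⟩ := exists_intCast_sub_one_dvd_sub hζ b
  obtain ⟨n, hn⟩ := exists_intCast_sub_one_dvd_sub hζ c
  have hm0 : (m : ZMod p) ≠ 0 := by
    rw [Ne, ZMod.intCast_zmod_eq_zero_iff_dvd, ← sub_one_dvd_intCast_iff hζ]
    exact fun hdvd ↦ hb ((dvd_iff_dvd_of_dvd_sub hm).2 hdvd)
  obtain ⟨k, hk⟩ : ∃ k : ℕ, (p : ℤ) ∣ n - k * m := by
    refine ⟨((n : ZMod p) / m).val, ?_⟩
    rw [← ZMod.intCast_zmod_eq_zero_iff_dvd]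
    simp [hm0]
  have hpow : (ζ - 1) ^ 2 ∣ ζ ^ k - k * (ζ - 1) - 1 := by
    simpa [mul_comm] using sq_dvd_add_pow_sub_sub (ζ - 1) 1 k
  have hlin : ζ - 1 ∣ c - k * b := by
    rw [← sub_one_dvd_intCast_iff hζ] at hk
    push_cast at hk
    convert dvd_add (dvd_sub hn (hm.mul_left (k : 𝓞 K))) hk using 1
    ring
  refine ⟨k, ?_⟩
  convert dvd_sub (sq (ζ - 1) ▸ mul_dvd_mul_left (ζ - 1) hlin) (hpow.mul_right b) using 1
  · linear_combination hc

end PrimeCyclotomicField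

section GoldenUnit

variable {R : Type*} [CommRing R] [IsDomain R] {ζ : R}

theorem geom_sum_five (hζ : IsPrimitiveRoot ζ 5) : 1 + ζ + ζ ^ 2 + ζ ^ 3 + ζ ^ 4 = 0 := by
  simpa [Finset.sum_range_succ] using hζ.geom_sum_eq_zero (by norm_num)

/-- The real unit `ζ² + ζ³` attached to a primitive fifth root of unity `ζ`. It is a root of
`X² + X - 1`, that is, up to sign, the golden ratio or its inverse. -/
def goldenUnit (hζ : IsPrimitiveRoot ζ 5) : Rˣ :=
  Units.mkOfMulEqOne (ζ ^ 2 + ζ ^ 3) (ζ ^ 2 + ζ ^ 3 + 1)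
    (by linear_combination geom_sum_five hζ + (ζ + 2) * hζ.pow_eq_one)

theorem coe_goldenUnit (hζ : IsPrimitiveRoot ζ 5) : (goldenUnit hζ : R) = ζ ^ 2 + ζ ^ 3 := rfl

theorem goldenUnit_sq (hζ : IsPrimitiveRoot ζ 5) :
    (goldenUnit hζ : R) ^ 2 = 1 - goldenUnit hζ := by
  simp only [coe_goldenUnit]
  linear_combination geom_sum_five hζ + (ζ + 2) * hζ.pow_eq_one

theorem exists_goldenUnit_pow_eq (hζ : IsPrimitiveRoot ζ 5) (n : ℕ) :
    ∃ a b : ℤ, ((goldenUnit hζ ^ n : Rˣ) : R) = a + b * goldenUnit hζ := by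
  induction n with
  | zero => exact ⟨1, 0, by simp⟩
  | succ n ih =>
    obtain ⟨a, b, hab⟩ := ih
    refine ⟨b, a - b, ?_⟩
    rw [pow_succ, Units.val_mul, hab]
    push_cast
    linear_combination (b : R) * goldenUnit_sq hζ

theorem sub_one_pow_three_dvd_goldenUnit_pow_sub (hζ : IsPrimitiveRoot ζ 5) (n : ℕ) :
    (ζ - 1) ^ 3 ∣
      ((goldenUnit hζ ^ n : Rˣ) : R) - (2 ^ n + n * 2 ^ (n + 1) * (ζ - 1) ^ 2) := by
  have hlin : (ζ - 1) ^ 3 ∣ (goldenUnit hζ : R) - 2 - 4 * (ζ - 1) ^ 2 :=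
    ⟨2 * ζ ^ 3 + 3 * ζ ^ 2 + 3 * ζ + 3, by
      rw [coe_goldenUnit]
      linear_combination (-2 * ζ ^ 2 + 5 * ζ - 3) * geom_sum_five hζ⟩
  have hsq : (ζ - 1) ^ 2 ∣ (goldenUnit hζ : R) - 2 := by
    have := dvd_add ((pow_dvd_pow _ (by norm_num)).trans hlin) (dvd_mul_left ((ζ - 1) ^ 2) 4)
    simpa using this
  have hbinom := sq_dvd_add_pow_sub_sub ((goldenUnit hζ : R) - 2) 2 n
  rw [add_sub_cancel] at hbinom
  have hfour : (ζ - 1) ^ 3 ∣ ((goldenUnit hζ : R) - 2) ^ 2 :=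
    (pow_dvd_pow _ (by norm_num)).trans (pow_mul (ζ - 1) 2 2 ▸ pow_dvd_pow_of_dvd hsq 2)
  convert dvd_add (hfour.trans hbinom) (hlin.mul_left (n * 2 ^ (n - 1))) using 1
  obtain _ | n := n <;> push_cast [Nat.add_sub_cancel] <;> ring

end GoldenUnit

section KummerLemma

variable {K : Type*} [Field K] {ζ : 𝓞 K}

theorem sub_one_pow_four_dvd_intCast (hζ : IsPrimitiveRoot ζ 5) {n : ℤ} (hn : (5 : ℤ) ∣ n) :
    (ζ - 1) ^ 4 ∣ (n : 𝓞 K) := by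
  obtain ⟨m, rfl⟩ := hn
  simpa using (associated_sub_one_pow hζ).dvd.mul_right (m : 𝓞 K)

variable [NumberField K] [IsCyclotomicExtension {5} ℚ K]

theorem eq_one_and_five_dvd_of_dvd_sub_intCast (hζ : IsPrimitiveRoot ζ 5) {τ : (𝓞 K)ˣ}
    (hτ : τ ^ 5 = 1) {b : ℕ} {m n : ℤ} (hm : ¬ (5 : ℤ) ∣ m)
    (h : (ζ - 1) ^ 3 ∣ ((τ * goldenUnit hζ ^ b : (𝓞 K)ˣ) : 𝓞 K) * m - n) : τ = 1 ∧ 5 ∣ b := by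
  have hprime : Prime (ζ - 1) := prime_sub_one hζ
  have h5 : Prime (5 : ℤ) := by norm_num
  obtain ⟨a, -, hτa⟩ : ∃ a < 5, ζ ^ a = τ :=
    hζ.eq_pow_of_pow_eq_one (by rw [← Units.val_pow_eq_pow_val, hτ, Units.val_one])
  obtain ⟨A, hA⟩ := h
  rw [Units.val_mul, ← hτa] at hA
  obtain ⟨B, hB⟩ := sub_one_pow_three_dvd_goldenUnit_pow_sub hζ b
  obtain ⟨C, hC⟩ : (ζ - 1) ^ 2 ∣ ζ ^ a - a * (ζ - 1) - 1 := by
    simpa [mul_comm] using sq_dvd_add_pow_sub_sub (ζ - 1) 1 a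
  have hconst : (5 : ℤ) ∣ 2 ^ b * m - n := by
    refine (sub_one_dvd_intCast_iff hζ).1 ?_
    refine ⟨(ζ - 1) ^ 2 * A - (a + (ζ - 1) * C) * (goldenUnit hζ ^ b : (𝓞 K)ˣ) * m
      - (b * 2 ^ (b + 1) * (ζ - 1) + (ζ - 1) ^ 2 * B) * m, ?_⟩
    push_cast at hA hB ⊢
    linear_combination hA - (goldenUnit hζ : 𝓞 K) ^ b * m * hC - m * hB
  obtain ⟨D, hD⟩ := sub_one_pow_four_dvd_intCast hζ hconst
  have ha : (5 : ℤ) ∣ a * m := by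
    refine (sub_one_dvd_intCast_iff hζ).1 ((goldenUnit hζ ^ b).isUnit.dvd_mul_right.1 ?_)
    refine ⟨(ζ - 1) * A - C * (goldenUnit hζ ^ b : (𝓞 K)ˣ) * m
      - (b * 2 ^ (b + 1) + (ζ - 1) * B) * m - (ζ - 1) ^ 2 * D, ?_⟩
    apply mul_left_cancel₀ hprime.ne_zero
    push_cast at hA hB hD ⊢
    linear_combination hA - (goldenUnit hζ : 𝓞 K) ^ b * m * hC - m * hB - hD
  have hτ1 : ζ ^ a = 1 :=
    (hζ.pow_eq_one_iff_dvd a).2 (Int.natCast_dvd_natCast.1 ((h5.dvd_or_dvd ha).resolve_right hm))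
  have hb : (5 : ℤ) ∣ b * 2 ^ (b + 1) * m := by
    refine (sub_one_dvd_intCast_iff hζ).1 ?_
    refine ⟨A - B * m - (ζ - 1) * D, ?_⟩
    apply mul_left_cancel₀ (pow_ne_zero 2 hprime.ne_zero)
    rw [hτ1] at hA
    push_cast at hA hB hD ⊢
    linear_combination hA - m * hB - hD
  have h2 : ¬ (5 : ℤ) ∣ 2 ^ (b + 1) := fun hdvd ↦ absurd (h5.dvd_of_dvd_pow hdvd) (by norm_num)
  exact ⟨Units.ext (hτa.symm.trans hτ1), Int.natCast_dvd_natCast.1 <|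
    (h5.dvd_or_dvd ((h5.dvd_or_dvd hb).resolve_right hm)).resolve_right h2⟩

theorem exists_units_eq_mul_zpow_mul_pow :
    ∃ η : (𝓞 K)ˣ, ∀ ε : (𝓞 K)ˣ, ∃ (τ w : (𝓞 K)ˣ) (e : ℤ), τ ^ 5 = 1 ∧ ε = τ * η ^ e * w ^ 5 := by
  have hrank : Units.rank K = 1 := by
    rw [Units.rank, InfinitePlace.card_eq_nrRealPlaces_add_nrComplexPlaces,
      IsCyclotomicExtension.Rat.nrRealPlaces_eq_zero K (n := 5) (by norm_num),
      IsCyclotomicExtension.Rat.nrComplexPlaces_eq_totient_div_two 5 K,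
      Nat.totient_prime Nat.prime_five]
  have : Unique (Fin (Units.rank K)) := hrank ▸ inferInstance
  refine ⟨Units.fundSystem K default, fun ε ↦ ?_⟩
  obtain ⟨⟨ξ, e⟩, hξ, -⟩ := Units.exist_unique_eq_mul_prod K ε
  have hξ10 : (ξ : (𝓞 K)ˣ) ^ 10 = 1 := by
    have hmem : (ξ : (𝓞 K)ˣ) ∈ rootsOfUnity (Units.torsionOrder K) (𝓞 K) := by
      rw [Units.rootsOfUnity_eq_torsion]
      exact ξ.2
    rw [IsCyclotomicExtension.Rat.torsionOrder_eq (n := 5)] at hmem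
    exact hmem
  refine ⟨ξ ^ 6, (ξ : (𝓞 K)ˣ)⁻¹, e default, ?_, ?_⟩
  · rw [← pow_mul, pow_mul _ 10 3, hξ10, one_pow]
  · rw [hξ, Fintype.prod_unique]
    simp only [inv_pow]
    rw [mul_right_comm, pow_succ (ξ : (𝓞 K)ˣ) 5, mul_comm _ (ξ : (𝓞 K)ˣ), mul_inv_cancel_right]

theorem exists_units_eq_mul_goldenUnit_pow_mul_pow (hζ : IsPrimitiveRoot ζ 5) (ε : (𝓞 K)ˣ) :
    ∃ (τ w : (𝓞 K)ˣ) (b : ℕ), τ ^ 5 = 1 ∧ ε = τ * goldenUnit hζ ^ b * w ^ 5 := by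
  obtain ⟨η, hη⟩ := exists_units_eq_mul_zpow_mul_pow (K := K)
  obtain ⟨τ₁, w₁, f, hτ₁, hf⟩ := hη (goldenUnit hζ)
  obtain ⟨τ₂, w₂, e, hτ₂, he⟩ := hη ε
  have hf5 : ¬ (5 : ℤ) ∣ f := by
    rintro ⟨g, rfl⟩
    obtain ⟨n, hn, -⟩ := exists_intCast_sub_one_pow_dvd_pow_sub hζ ((η ^ g * w₁ : (𝓞 K)ˣ) : 𝓞 K)
    have hgold : τ₁⁻¹ * goldenUnit hζ ^ 1 = (η ^ g * w₁) ^ 5 := by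
      rw [pow_one, hf, mul_pow, ← zpow_natCast (η ^ g), ← zpow_mul, mul_comm g]
      group
    obtain ⟨-, h51⟩ := eq_one_and_five_dvd_of_dvd_sub_intCast hζ (τ := τ₁⁻¹) (b := 1) (m := 1)
      (n := n ^ 5) (by rw [inv_pow, hτ₁, inv_one]) (by norm_num) (by
        rw [hgold]
        push_cast at hn ⊢
        rw [mul_one]
        exact (pow_dvd_pow _ (by norm_num)).trans hn)
    omega
  obtain ⟨b, g, hg⟩ : ∃ b : ℕ, (5 : ℤ) ∣ e - b * f := by
    refine ⟨((e : ZMod 5) / f).val, ?_⟩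
    have hf0 : (f : ZMod 5) ≠ 0 := (ZMod.intCast_zmod_eq_zero_iff_dvd f 5).not.2 hf5
    refine (ZMod.intCast_zmod_eq_zero_iff_dvd _ 5).1 ?_
    simp [hf0]
  refine ⟨τ₂ * (τ₁ ^ b)⁻¹, η ^ g * w₂ * (w₁ ^ b)⁻¹, b, ?_, ?_⟩
  · rw [mul_pow, inv_pow, ← pow_mul, mul_comm b, pow_mul, hτ₁, hτ₂, one_pow, inv_one, one_mul]
  · rw [he, hf, show e = 5 * g + b * f by linarith]
    have hfive : η ^ (5 * g + b * f) = (η ^ f) ^ b * (η ^ g) ^ 5 := by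
      rw [← zpow_natCast, ← zpow_natCast, ← zpow_mul, ← zpow_mul, ← zpow_add]
      congr 1
      push_cast
      ring
    simp only [hfive, mul_pow, inv_pow, pow_right_comm w₁, ← mul_assoc, eq_mul_inv_iff_mul_eq,
      inv_mul_cancel_right]
    simp only [mul_assoc, mul_comm, mul_left_comm]

theorem exists_units_eq_pow_of_dvd_mul_sub_intCast (hζ : IsPrimitiveRoot ζ 5) {ε : (𝓞 K)ˣ}
    {m n : ℤ} (hm : ¬ (5 : ℤ) ∣ m) (h : (ζ - 1) ^ 3 ∣ (ε : 𝓞 K) * m - n) :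
    ∃ w : (𝓞 K)ˣ, ε = w ^ 5 := by
  obtain ⟨τ, w, b, hτ, rfl⟩ := exists_units_eq_mul_goldenUnit_pow_mul_pow hζ ε
  obtain ⟨k, hk, hwk⟩ := exists_intCast_sub_one_pow_dvd_pow_sub hζ (w : 𝓞 K)
  have h5 : Prime (5 : ℤ) := by norm_num
  have hk5 : ¬ (5 : ℤ) ∣ k := fun hdvd ↦ (prime_sub_one hζ).not_isUnit <| isUnit_of_dvd_unit
    ((dvd_iff_dvd_of_dvd_sub hwk).2 ((sub_one_dvd_intCast_iff hζ).2 hdvd)) w.isUnit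
  have hkm : ¬ (5 : ℤ) ∣ k ^ 5 * m := fun hdvd ↦
    hk5 (h5.dvd_of_dvd_pow ((h5.dvd_or_dvd hdvd).resolve_right hm))
  have hcongr : (ζ - 1) ^ 3 ∣
      (τ * goldenUnit hζ ^ b : (𝓞 K)ˣ) * ((k ^ 5 * m : ℤ) : 𝓞 K) - n := by
    have hk3 := (pow_dvd_pow (ζ - 1) (by norm_num : 3 ≤ 5)).trans hk
    convert dvd_sub h (hk3.mul_left ((τ * goldenUnit hζ ^ b : (𝓞 K)ˣ) * (m : 𝓞 K))) using 1
    push_cast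
    ring
  obtain ⟨rfl, c, rfl⟩ := eq_one_and_five_dvd_of_dvd_sub_intCast hζ hτ hkm hcongr
  refine ⟨goldenUnit hζ ^ c * w, ?_⟩
  rw [one_mul, mul_pow, ← pow_mul, mul_comm c]

theorem exists_units_eq_mul_pow_of_dvd_sub_intCast_mul (hζ : IsPrimitiveRoot ζ 5) {a b : 𝓞 K}
    {p q : (𝓞 K)ˣ} {n : ℤ} (ha : ¬ ζ - 1 ∣ a)
    (h : (ζ - 1) ^ 3 ∣ p * a ^ 5 - n * (q * b ^ 5)) : ∃ w : (𝓞 K)ˣ, p = q * w ^ 5 := by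
  obtain ⟨k, hk, hak⟩ := exists_intCast_sub_one_pow_dvd_pow_sub hζ a
  obtain ⟨l, hl, -⟩ := exists_intCast_sub_one_pow_dvd_pow_sub hζ b
  have hle : (ζ - 1) ^ 3 ∣ (ζ - 1) ^ 5 := pow_dvd_pow _ (by norm_num)
  have h5 : Prime (5 : ℤ) := by norm_num
  have hk5 : ¬ (5 : ℤ) ∣ k ^ 5 := fun hdvd ↦ ha <| (dvd_iff_dvd_of_dvd_sub hak).2 <|
    (sub_one_dvd_intCast_iff hζ).2 (h5.dvd_of_dvd_pow hdvd)
  have hpq : (ζ - 1) ^ 3 ∣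
      ((q⁻¹ * p : (𝓞 K)ˣ) : 𝓞 K) * ((k ^ 5 : ℤ) : 𝓞 K) - (n * l ^ 5 : ℤ) := by
    convert dvd_add (h.mul_left ((q⁻¹ : (𝓞 K)ˣ) : 𝓞 K))
      (dvd_sub ((hle.trans hl).mul_left (n : 𝓞 K))
        ((hle.trans hk).mul_left ((q⁻¹ * p : (𝓞 K)ˣ) : 𝓞 K))) using 1
    push_cast
    linear_combination (n * b ^ 5) * Units.inv_mul q
  obtain ⟨w, hw⟩ := exists_units_eq_pow_of_dvd_mul_sub_intCast hζ hk5 hpq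
  exact ⟨w, by rw [← hw, mul_inv_cancel_left]⟩

theorem exists_units_eq_mul_pow_and_sq_dvd_sub (hζ : IsPrimitiveRoot ζ 5) {a b : 𝓞 K}
    {p q : (𝓞 K)ˣ} (ha : ¬ ζ - 1 ∣ a) (h : (ζ - 1) ^ 3 ∣ p * a ^ 5 - q * b ^ 5) :
    ∃ w : (𝓞 K)ˣ, p = q * w ^ 5 ∧ (ζ - 1) ^ 2 ∣ w * a - b := by
  have hprime : Prime (ζ - 1) := prime_sub_one hζ
  have hpq : ζ - 1 ∣ p * a ^ 5 - q * b ^ 5 := (dvd_pow_self _ three_ne_zero).trans h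
  have hb : ¬ ζ - 1 ∣ b := fun hdvd ↦ ha <| hprime.dvd_of_dvd_pow <| p.isUnit.dvd_mul_left.1 <|
    (dvd_iff_dvd_of_dvd_sub hpq).2 ((dvd_pow hdvd (by norm_num)).mul_left _)
  obtain ⟨w, rfl⟩ :=
    exists_units_eq_mul_pow_of_dvd_sub_intCast_mul hζ (n := 1) ha (by simpa using h)
  have hwab : ζ - 1 ∣ (w * a) ^ 5 - b ^ 5 := by
    rw [← q.isUnit.dvd_mul_left]
    convert hpq using 1
    push_cast
    ring
  obtain ⟨k, hk⟩ := exists_sub_one_sq_dvd_sub_pow_mul hζ hb hwab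
  obtain ⟨ξ, hξ⟩ := hζ.isUnit (by norm_num)
  have hξ5 : ξ ^ 5 = 1 := Units.ext (by simpa [hξ] using hζ.pow_eq_one)
  refine ⟨(ξ ^ k)⁻¹ * w, ?_, ?_⟩
  · rw [mul_pow, inv_pow, ← pow_mul, mul_comm k, pow_mul, hξ5, one_pow, inv_one, one_mul]
  · rw [← (ξ ^ k).isUnit.dvd_mul_left, mul_sub, ← mul_assoc, ← Units.val_mul, mul_inv_cancel_left]
    simpa [hξ] using hk

end KummerLemma

section FactorPowers

variable {R ι : Type*} [CommRing R] [IsDomain R] [IsPrincipalIdealRing R] {s : Finset ι} {f : ι → R}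

theorem exists_associated_pow_of_prod_of_isCoprime {n : ℕ} {z : R}
    (hf : (s : Set ι).Pairwise (Function.onFun IsCoprime f))
    (hprod : Associated (∏ i ∈ s, f i) (z ^ n)) {i : ι} (hi : i ∈ s) :
    ∃ d, Associated (f i) (d ^ n) := by
  classical
  rw [← Finset.mul_prod_erase _ _ hi] at hprod
  have hcop : IsCoprime (f i) (∏ j ∈ s.erase i, f j) := IsCoprime.prod_right fun j hj ↦
    hf hi (Finset.mem_of_mem_erase hj) (Finset.ne_of_mem_erase hj).symm
  obtain ⟨d, hd⟩ := exists_associated_pow_of_associated_pow_mul hcop hprod.symm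
  exact ⟨d, hd.symm⟩

theorem exists_associated_mul_pow_of_prod_of_isCoprime {m n : ℕ} {q z : R} (hq : Prime q)
    (hm : m ≠ 0) (hf : (s : Set ι).Pairwise (Function.onFun IsCoprime f))
    (hprod : Associated (∏ i ∈ s, f i) (q ^ m * z ^ n)) :
    ∃ j ∈ s, (∃ d, Associated (f j) (q ^ m * d ^ n)) ∧
      ∀ i ∈ s, i ≠ j → ∃ d, Associated (f i) (d ^ n) := by
  classical
  have hdvd : q ^ m ∣ ∏ i ∈ s, f i := (dvd_mul_right _ _).trans hprod.symm.dvd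
  obtain ⟨j, hj, hqj⟩ := (hq.dvd_finsetProd_iff f).1 ((dvd_pow_self q hm).trans hdvd)
  rw [← Finset.mul_prod_erase _ _ hj] at hdvd
  have hrest : ¬ q ∣ ∏ i ∈ s.erase j, f i := fun h ↦ by
    obtain ⟨i, hi, hqi⟩ := (hq.dvd_finsetProd_iff f).1 h
    exact hq.not_isUnit <|
      (hf (Finset.mem_of_mem_erase hi) hj (Finset.ne_of_mem_erase hi)).isUnit_of_dvd' hqi hqj
  obtain ⟨g, hg⟩ := hq.pow_dvd_of_dvd_mul_right m hrest hdvd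
  have hupdate : ∀ i ∈ s, Function.update f j g i ∣ f i := fun i _ ↦ by
    obtain rfl | hij := eq_or_ne i j
    · simp [hg]
    · simp [hij]
  have hprod' : Associated (∏ i ∈ s, Function.update f j g i) (z ^ n) := by
    rw [Finset.prod_update_of_mem hj, ← Finset.erase_eq]
    rw [← Finset.mul_prod_erase _ _ hj, hg, mul_assoc] at hprod
    exact hprod.of_mul_left (Associated.refl _) (pow_ne_zero m hq.ne_zero)
  have hpow := fun i hi ↦ exists_associated_pow_of_prod_of_isCoprime (i := i)
    (fun i hi k hk hik ↦ (hf hi hk hik).of_isCoprime_of_dvd_left (hupdate i hi)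
      |>.of_isCoprime_of_dvd_right (hupdate k hk)) hprod' hi
  refine ⟨j, hj, ?_, fun i hi hij ↦ by simpa [hij] using hpow i hi⟩
  obtain ⟨d, hd⟩ := hpow j hj
  rw [Function.update_self] at hd
  exact ⟨d, hg ▸ hd.mul_left _⟩

theorem isCoprime_of_dvd_add_mul {p : ℕ} [hp : Fact p.Prime] {ζ : R} (hζ : IsPrimitiveRoot ζ p)
    (hprime : Prime (ζ - 1)) {η θ x y a b : R} (hη : η ∈ nthRootsFinset p 1)
    (hθ : θ ∈ nthRootsFinset p 1) (hne : η ≠ θ) (hxy : IsCoprime x y) (ha : a ∣ x + η * y)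
    (hb : b ∣ x + θ * y) (hab : ¬ (ζ - 1 ∣ a ∧ ζ - 1 ∣ b)) : IsCoprime a b := by
  refine isCoprime_of_prime_dvd (fun h ↦ hab (by simp [h])) fun z hz hza hzb ↦ hab ?_
  obtain ⟨u, v, huv⟩ := hxy
  have hzsub : z ∣ η - θ := by
    convert dvd_sub ((hzb.trans hb).mul_left (u * η - v)) ((hza.trans ha).mul_left (u * θ - v))
      using 1
    linear_combination (θ - η) * huv
  have hassoc := hζ.nthRootsFinset_pairwise_associated_sub_one_sub_of_prime hp.out hη hθ hne
  have hzζ : Associated z (ζ - 1) := hz.associated_of_dvd hprime (hzsub.trans hassoc.symm.dvd)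
  exact ⟨hzζ.symm.dvd.trans hza, hzζ.symm.dvd.trans hzb⟩

end FactorPowers

section PowersOfTwo

variable {K : Type*} [Field K] [NumberField K] [IsCyclotomicExtension {5} ℚ K] {ζ : 𝓞 K}

theorem five_dvd_of_dvd_two_pow_mul_pow_sub_pow {s : ℕ} {m n : ℤ} (hn : ¬ (5 : ℤ) ∣ n)
    (h : (25 : ℤ) ∣ 2 ^ s * m ^ 5 - n ^ 5) : 5 ∣ s := by
  have hpow : ∀ x : ZMod 25, x ^ 20 = 1 ∨ x ^ 5 = 0 := by decide
  have hn5 : (n : ZMod 25) ^ 5 ≠ 0 := by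
    rw [← Int.cast_pow, Ne, ZMod.intCast_zmod_eq_zero_iff_dvd]
    exact fun hdvd ↦ hn <| (show Prime (5 : ℤ) by norm_num).dvd_of_dvd_pow <|
      (show (5 : ℤ) ∣ (25 : ℕ) by norm_num).trans hdvd
  have hmn : (2 : ZMod 25) ^ s * (m : ZMod 25) ^ 5 = (n : ZMod 25) ^ 5 := by
    rw [← sub_eq_zero]
    exact_mod_cast (ZMod.intCast_zmod_eq_zero_iff_dvd _ 25).2 h
  have hm5 : (m : ZMod 25) ^ 5 ≠ 0 := fun h0 ↦ hn5 (by rw [← hmn, h0, mul_zero])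
  have h16 : (16 : ZMod 25) ^ s = 1 := by
    have h20 := congrArg (· ^ 4) hmn
    simp only [mul_pow, ← pow_mul, mul_comm s, Nat.reduceMul] at h20
    rw [(hpow m).resolve_right hm5, (hpow n).resolve_right hn5, mul_one, pow_mul] at h20
    exact h20
  have hord : orderOf (16 : ZMod 25) = 5 := orderOf_eq_prime (by decide) (by decide)
  exact hord ▸ orderOf_dvd_of_pow_eq_one h16

theorem prime_two : Prime (2 : 𝓞 K) := by
  have hord : orderOf (2 : ZMod 5) = 4 :=
    orderOf_eq_of_pow_and_pow_div_prime (by norm_num) (by decide) fun q hq hdvd ↦ by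
      obtain rfl := (Nat.prime_dvd_prime_iff_eq hq Nat.prime_two).1
        (hq.dvd_of_dvd_pow (show q ∣ 2 ^ 2 from hdvd))
      decide
  exact_mod_cast prime_natCast_of_orderOf_eq_totient (p := 2) (m := 5) (K := K) (by norm_num)
    (by exact_mod_cast hord)

theorem not_sub_one_pow_five_dvd_sub_two_pow_mul (hζ : IsPrimitiveRoot ζ 5) {s : ℕ}
    (hs : ¬ 5 ∣ s) {a b : 𝓞 K} (ha : ¬ ζ - 1 ∣ a) (p q : (𝓞 K)ˣ) :
    ¬ (ζ - 1) ^ 5 ∣ p * a ^ 5 - q * (2 ^ s * b ^ 5) := by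
  intro h
  obtain ⟨w, rfl⟩ := exists_units_eq_mul_pow_of_dvd_sub_intCast_mul hζ (b := b) (p := p) (q := q)
    (n := 2 ^ s) ha (by
    convert (pow_dvd_pow (ζ - 1) (by norm_num : 3 ≤ 5)).trans h using 1
    push_cast
    ring)
  obtain ⟨n, hn, hnwa⟩ := exists_intCast_sub_one_pow_dvd_pow_sub hζ (w * a)
  obtain ⟨m, hm, -⟩ := exists_intCast_sub_one_pow_dvd_pow_sub hζ b
  have hwab : (ζ - 1) ^ 5 ∣ (w * a) ^ 5 - 2 ^ s * b ^ 5 := by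
    rw [← q.isUnit.dvd_mul_left]
    convert h using 1
    push_cast
    ring
  have hn5 : ¬ (5 : ℤ) ∣ n := fun hdvd ↦ ha <| w.isUnit.dvd_mul_left.1 <|
    (dvd_iff_dvd_of_dvd_sub hnwa).2 ((sub_one_dvd_intCast_iff hζ).2 hdvd)
  have hint : (ζ - 1) ^ 5 ∣ ((2 ^ s * m ^ 5 - n ^ 5 : ℤ) : 𝓞 K) := by
    convert dvd_sub (dvd_sub hn hwab) (hm.mul_left (2 ^ s)) using 1
    push_cast
    ring
  exact hs (five_dvd_of_dvd_two_pow_mul_pow_sub_pow hn5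
    (sq_dvd_of_sub_one_pow_dvd_intCast hζ hint))

theorem sub_one_pow_six_dvd_of_pow_three_dvd (hζ : IsPrimitiveRoot ζ 5) {a b : 𝓞 K}
    {p q : (𝓞 K)ˣ} (ha : ¬ ζ - 1 ∣ a) (h : (ζ - 1) ^ 3 ∣ p * a ^ 5 - q * b ^ 5) :
    (ζ - 1) ^ 6 ∣ p * a ^ 5 - q * b ^ 5 := by
  obtain ⟨w, rfl, hw⟩ := exists_units_eq_mul_pow_and_sq_dvd_sub hζ ha h
  convert (sub_one_pow_dvd_pow_sub_pow hζ (m := 1) hw).mul_left (q : 𝓞 K) using 1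
  push_cast
  ring

theorem not_sub_one_dvd_two (hζ : IsPrimitiveRoot ζ 5) : ¬ ζ - 1 ∣ (2 : 𝓞 K) := fun h ↦ by
  have := (sub_one_dvd_intCast_iff hζ (n := 2)).1 (by simpa using h)
  norm_num at this

end PowersOfTwo

/-- A coprime solution of `X⁵ + Y⁵ = 2Z⁵` with `X` and `Y` congruent modulo `(ζ - 1)²`: the
object of a descent that raises the power of `ζ - 1` dividing `X - Y`. -/
structure DiagonalSolution {R : Type*} [CommRing R] (ζ X Y Z : R) : Prop where
  isCoprime : IsCoprime X Y
  pow_add_pow : X ^ 5 + Y ^ 5 = 2 * Z ^ 5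
  sq_dvd_sub : (ζ - 1) ^ 2 ∣ X - Y

namespace DiagonalSolution

variable {K : Type*} [Field K] [NumberField K] [IsCyclotomicExtension {5} ℚ K]
  {ζ X Y Z η θ : 𝓞 K}

theorem not_dvd_add_mul (hζ : IsPrimitiveRoot ζ 5) (h : DiagonalSolution ζ X Y Z)
    (hη : η ∈ nthRootsFinset 5 1) : ¬ ζ - 1 ∣ X + η * Y := fun hdvd ↦ by
  have hprime := prime_sub_one hζ
  have hXY : ζ - 1 ∣ X - Y := (dvd_pow_self _ two_ne_zero).trans h.sq_dvd_sub
  have hηX : ζ - 1 ∣ X - η * Y := sub_one_dvd_sub_mul hζ hη hXY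
  have hX : ζ - 1 ∣ X := (hprime.dvd_or_dvd (a := 2) (by
    convert dvd_add hdvd hηX using 1
    ring)).resolve_left (not_sub_one_dvd_two hζ)
  exact hprime.not_isUnit (h.isCoprime.isUnit_of_dvd' hX ((dvd_iff_dvd_of_dvd_sub hXY).1 hX))

theorem isCoprime_add_mul [IsPrincipalIdealRing (𝓞 K)] (hζ : IsPrimitiveRoot ζ 5)
    (h : DiagonalSolution ζ X Y Z) (hη : η ∈ nthRootsFinset 5 1) (hθ : θ ∈ nthRootsFinset 5 1)
    (hne : η ≠ θ) : IsCoprime (X + η * Y) (X + θ * Y) :=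
  isCoprime_of_dvd_add_mul hζ (prime_sub_one hζ) hη hθ hne h.isCoprime dvd_rfl dvd_rfl
    fun hdvd ↦ h.not_dvd_add_mul hζ hη hdvd.1

theorem pow_five_dvd_sub (hζ : IsPrimitiveRoot ζ 5) (h : DiagonalSolution ζ X Y Z)
    (hη : η ∈ nthRootsFinset 5 1) (hη1 : η ≠ 1) (hθ : θ ∈ nthRootsFinset 5 1) (hθ1 : θ ≠ 1)
    (hne : η ≠ θ) {a b : 𝓞 K} (ha : Associated (X + η * Y) (a ^ 5))
    (hb : Associated (X + θ * Y) (b ^ 5)) : (ζ - 1) ^ 5 ∣ X - Y := by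
  have hprime := prime_sub_one hζ
  have hdiff := hζ.nthRootsFinset_pairwise_associated_sub_one_sub_of_prime Nat.prime_five hθ hη
    hne.symm
  obtain ⟨u, hu⟩ := isUnit_one_add_of_mem_nthRootsFinset (by norm_num) hη hη1
  obtain ⟨v, hv⟩ := isUnit_one_add_of_mem_nthRootsFinset (by norm_num) hθ hθ1
  have ha' : ¬ ζ - 1 ∣ a := fun hdvd ↦
    h.not_dvd_add_mul hζ hη (ha.dvd_iff_dvd_right.2 (dvd_pow hdvd (by norm_num)))
  obtain ⟨p, hp⟩ := ha.symm
  obtain ⟨q, hq⟩ := hb.symm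
  have hcross : ((v * p : (𝓞 K)ˣ) : 𝓞 K) * a ^ 5 - (u * q : (𝓞 K)ˣ) * b ^ 5
      = (θ - η) * (X - Y) := by
    push_cast
    linear_combination v * hp - u * hq + (X + η * Y) * hv - (X + θ * Y) * hu
  have hthree : (ζ - 1) ^ 3 ∣ (θ - η) * (X - Y) := by
    rw [pow_succ']
    exact mul_dvd_mul hdiff.dvd h.sq_dvd_sub
  have hsix := sub_one_pow_six_dvd_of_pow_three_dvd hζ ha' (hcross ▸ hthree)
  rw [hcross, ← (hdiff.mul_right (X - Y)).dvd_iff_dvd_right, pow_succ'] at hsix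
  exact (mul_dvd_mul_iff_left hprime.ne_zero).1 hsix

theorem exists_associated (hζ : IsPrimitiveRoot ζ 5) [IsPrincipalIdealRing (𝓞 K)]
    (h : DiagonalSolution ζ X Y Z) :
    (∃ a, Associated (X + Y) (2 * a ^ 5)) ∧
      ∀ η ∈ nthRootsFinset 5 1, η ≠ 1 → ∃ a, Associated (X + η * Y) (a ^ 5) := by
  classical
  have hprod : Associated (∏ η ∈ nthRootsFinset 5 1, (X + η * Y)) (2 ^ 1 * Z ^ 5) := by
    rw [← hζ.pow_add_pow_eq_prod_add_mul _ _ (by decide), h.pow_add_pow, pow_one]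
  obtain ⟨j, hj, ⟨b, hb⟩, hrest⟩ := exists_associated_mul_pow_of_prod_of_isCoprime prime_two
    one_ne_zero (fun η hη θ hθ ↦ h.isCoprime_add_mul hζ hη hθ) hprod
  obtain rfl | hj1 := eq_or_ne j 1
  · exact ⟨⟨b, by simpa using hb⟩, hrest⟩
  -- If `2` divided another factor `X + j * Y`, two of the remaining conjugates would give
  -- `(ζ - 1)⁵ ∣ X - Y`, and comparing one of them with `X + j * Y` would make `2` a fifth power
  -- modulo `(ζ - 1)⁵`, up to a unit.
  have hcard : 1 < (((nthRootsFinset 5 (1 : 𝓞 K)).erase 1).erase j).card := by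
    rw [Finset.card_erase_of_mem (Finset.mem_erase.2 ⟨hj1, hj⟩),
      Finset.card_erase_of_mem (one_mem_nthRootsFinset (by norm_num)), hζ.card_nthRootsFinset]
    norm_num
  obtain ⟨η, hη, θ, hθ, hne⟩ := Finset.one_lt_card.1 hcard
  simp only [Finset.mem_erase] at hη hθ
  obtain ⟨hηj, hη1, hη⟩ := hη
  obtain ⟨hθj, hθ1, hθ⟩ := hθ
  obtain ⟨a, ha⟩ := hrest η hη hηj
  obtain ⟨c, hc⟩ := hrest θ hθ hθj
  have hfive := h.pow_five_dvd_sub hζ hη hη1 hθ hθ1 hne ha hc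
  have ha' : ¬ ζ - 1 ∣ a := fun hdvd ↦
    h.not_dvd_add_mul hζ hη (ha.dvd_iff_dvd_right.2 (dvd_pow hdvd (by norm_num)))
  obtain ⟨u, hu⟩ := isUnit_one_add_of_mem_nthRootsFinset (by norm_num) hη hη1
  obtain ⟨v, hv⟩ := isUnit_one_add_of_mem_nthRootsFinset (by norm_num) hj hj1
  obtain ⟨p, hp⟩ := ha.symm
  obtain ⟨q, hq⟩ := hb.symm
  refine (not_sub_one_pow_five_dvd_sub_two_pow_mul hζ (s := 1) (by norm_num) (b := b) ha'
    (v * p) (u * q) ?_).elim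
  convert hfive.mul_left (j - η) using 1
  push_cast
  linear_combination v * hp - u * hq + (X + η * Y) * hv - (X + j * Y) * hu

theorem exists_add_mul_eq (hζ : IsPrimitiveRoot ζ 5) [IsPrincipalIdealRing (𝓞 K)]
    (h : DiagonalSolution ζ X Y Z) :
    ∃ (e : (𝓞 K)ˣ) (a : 𝓞 K), X + Y = e * (2 * a ^ 5) ∧ ∀ η ∈ nthRootsFinset 5 1, η ≠ 1 →
      ∃ b, X + η * Y = (1 + η) * e * b ^ 5 ∧ (ζ - 1) ^ 2 ∣ b - a := by
  have hprime := prime_sub_one hζ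
  obtain ⟨⟨a, ha⟩, hrest⟩ := h.exists_associated hζ
  obtain ⟨e, he⟩ := ha.symm
  refine ⟨e, a, by rw [← he, mul_comm], fun η hη hη1 ↦ ?_⟩
  obtain ⟨b, hb⟩ := hrest η hη hη1
  have hb' : ¬ ζ - 1 ∣ b := fun hdvd ↦
    h.not_dvd_add_mul hζ hη (hb.dvd_iff_dvd_right.2 (dvd_pow hdvd (by norm_num)))
  obtain ⟨p, hp⟩ := hb.symm
  obtain ⟨u, hu⟩ := isUnit_one_add_of_mem_nthRootsFinset (by norm_num) hη hη1
  have hthree : (ζ - 1) ^ 3 ∣ p * b ^ 5 - (u * e : (𝓞 K)ˣ) * a ^ 5 := by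
    have hη' : ζ - 1 ∣ 1 - η :=
      hζ.sub_one_dvd_sub Nat.prime_five (one_mem_nthRootsFinset (by norm_num)) hη
    refine hprime.pow_dvd_of_dvd_mul_left 3 (not_sub_one_dvd_two hζ) ?_
    convert mul_dvd_mul hη' h.sq_dvd_sub using 1
    · ring
    · push_cast
      linear_combination 2 * hp - 2 * a ^ 5 * e * hu - (1 + η) * he
  obtain ⟨w, rfl, hw⟩ := exists_units_eq_mul_pow_and_sq_dvd_sub hζ hb' hthree
  refine ⟨w * b, ?_, hw⟩
  rw [← hp, ← hu]
  push_cast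
  ring

theorem exists_descent (hζ : IsPrimitiveRoot ζ 5) [IsPrincipalIdealRing (𝓞 K)]
    (h : DiagonalSolution ζ X Y Z) : ∃ X' Y' Z', DiagonalSolution ζ X' Y' Z' ∧
      Associated ((ζ - 1) * (X - Y)) (X' ^ 5 - Y' ^ 5) := by
  have hmem₁ : ζ ∈ nthRootsFinset 5 (1 : 𝓞 K) := hζ.mem_nthRootsFinset (by norm_num)
  have hmem₄ := pow_mem_nthRootsFinset hζ 4
  have hne₁ : ζ ≠ 1 := hζ.ne_one (by norm_num)
  have hne₄ : ζ ^ 4 ≠ 1 := hζ.pow_ne_one_of_pos_of_lt (by norm_num) (by norm_num)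
  have hne : ζ ^ 4 ≠ ζ := fun heq ↦ by
    have := hζ.pow_inj (by norm_num) (by norm_num) (heq.trans (pow_one ζ).symm)
    norm_num at this
  obtain ⟨e, a, ha, hrest⟩ := h.exists_add_mul_eq hζ
  obtain ⟨b, hb, hba⟩ := hrest ζ hmem₁ hne₁
  obtain ⟨c, hc, hca⟩ := hrest (ζ ^ 4) hmem₄ hne₄
  obtain ⟨u, hu⟩ := isUnit_one_add_of_mem_nthRootsFinset (by norm_num) hmem₁ hne₁
  obtain ⟨v, hv⟩ := isUnit_one_add_of_mem_nthRootsFinset (by norm_num) hmem₄ hne₄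
  rw [← hu] at hb
  rw [← hv] at hc
  refine ⟨b, c, a, ⟨?_, ?_, by simpa using dvd_sub hba hca⟩, ?_⟩
  · refine (h.isCoprime_add_mul hζ hmem₁ hmem₄ hne.symm).of_isCoprime_of_dvd_left ?_
      |>.of_isCoprime_of_dvd_right ?_
    · exact hb ▸ (dvd_pow_self b (by norm_num)).mul_left _
    · exact hc ▸ (dvd_pow_self c (by norm_num)).mul_left _
  · refine (u * v * e).isUnit.mul_left_cancel ?_
    push_cast
    linear_combination u * v * ha - v * hb - u * hc + (X + ζ * Y) * hv + (X + ζ ^ 4 * Y) * hu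
      - (X + Y) * (v * hu + (1 + ζ) * hv) - (X - Y) * hζ.pow_eq_one
  · refine ((hζ.nthRootsFinset_pairwise_associated_sub_one_sub_of_prime Nat.prime_five hmem₄
      hmem₁ hne).mul_right (X - Y)).trans (Associated.symm ⟨u * v * e, ?_⟩)
    push_cast
    linear_combination -v * hb + u * hc + (X + ζ * Y) * hv - (X + ζ ^ 4 * Y) * hu

protected theorem eq (hζ : IsPrimitiveRoot ζ 5) [IsPrincipalIdealRing (𝓞 K)]
    (h : DiagonalSolution ζ X Y Z) : X = Y := by
  have hprime := prime_sub_one hζ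
  have hdvd : ∀ (n : ℕ) {X Y Z : 𝓞 K}, DiagonalSolution ζ X Y Z → (ζ - 1) ^ (n + 1) ∣ X - Y := by
    intro n
    induction n with
    | zero => exact fun h ↦ (pow_dvd_pow _ one_le_two).trans h.sq_dvd_sub
    | succ n ih =>
      intro X Y Z h
      obtain ⟨X', Y', Z', h', hassoc⟩ := h.exists_descent hζ
      have := hassoc.dvd_iff_dvd_right.2 (sub_one_pow_dvd_pow_sub_pow hζ (ih h'))
      rw [← add_assoc n 4 1, pow_succ', mul_dvd_mul_iff_left hprime.ne_zero] at this
      exact (pow_dvd_pow _ (by omega)).trans this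
  by_contra hne
  obtain ⟨n, hn⟩ := FiniteMultiplicity.of_not_isUnit hprime.not_isUnit (sub_ne_zero.2 hne)
  exact hn (hdvd n h)

end DiagonalSolution

/-- A coprime solution of `X⁵ + Y⁵ = e · 2ˢ · ((ζ - 1)Z)⁵`, with `e` some unit, in which `Y` has
been multiplied by a root of unity so that `(ζ - 1)²` divides `X + Y`: the
object of a descent that raises the power of `ζ - 1` dividing `Z`. -/
structure RamifiedSolution {R : Type*} [CommRing R] (s : ℕ) (ζ X Y Z : R) : Prop where
  isCoprime : IsCoprime X Y
  associated : Associated (X ^ 5 + Y ^ 5) (2 ^ s * ((ζ - 1) * Z) ^ 5)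
  sq_dvd_add : (ζ - 1) ^ 2 ∣ X + Y

namespace RamifiedSolution

variable {K : Type*} [Field K] [NumberField K] [IsCyclotomicExtension {5} ℚ K]
  {s : ℕ} {ζ X Y Z η θ : 𝓞 K} {f : 𝓞 K → 𝓞 K}

theorem not_dvd_right (hζ : IsPrimitiveRoot ζ 5) (h : RamifiedSolution s ζ X Y Z) :
    ¬ ζ - 1 ∣ Y := fun hY ↦ by
  have hX : ζ - 1 ∣ X :=
    (dvd_add_left hY).1 ((dvd_pow_self _ two_ne_zero).trans h.sq_dvd_add)
  exact (prime_sub_one hζ).not_isUnit (h.isCoprime.isUnit_of_dvd' hX hY)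

theorem dvd_factor_one (hζ : IsPrimitiveRoot ζ 5) (h : RamifiedSolution s ζ X Y Z)
    (hf : ∀ η ∈ nthRootsFinset 5 1, X + η * Y = (ζ - 1) * f η) : ζ - 1 ∣ f 1 := by
  have hdvd := h.sq_dvd_add
  rwa [← one_mul Y, hf 1 (one_mem_nthRootsFinset (by norm_num)), sq,
    mul_dvd_mul_iff_left (prime_sub_one hζ).ne_zero] at hdvd

theorem not_dvd_factor (hζ : IsPrimitiveRoot ζ 5) (h : RamifiedSolution s ζ X Y Z)
    (hf : ∀ η ∈ nthRootsFinset 5 1, X + η * Y = (ζ - 1) * f η) (hη : η ∈ nthRootsFinset 5 1)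
    (hη1 : η ≠ 1) : ¬ ζ - 1 ∣ f η := fun hdvd ↦ h.not_dvd_right hζ <| by
  have hassoc := hζ.nthRootsFinset_pairwise_associated_sub_one_sub_of_prime Nat.prime_five hη
    (one_mem_nthRootsFinset (by norm_num)) hη1
  have hsq : (ζ - 1) ^ 2 ∣ (η - 1) * Y := by
    convert dvd_sub (hf η hη ▸ sq (ζ - 1) ▸ mul_dvd_mul_left (ζ - 1) hdvd) h.sq_dvd_add using 1
    ring
  rwa [← (hassoc.mul_right Y).dvd_iff_dvd_right, sq,
    mul_dvd_mul_iff_left (prime_sub_one hζ).ne_zero] at hsq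

theorem pairwise_isCoprime_factor [IsPrincipalIdealRing (𝓞 K)] (hζ : IsPrimitiveRoot ζ 5)
    (h : RamifiedSolution s ζ X Y Z)
    (hf : ∀ η ∈ nthRootsFinset 5 1, X + η * Y = (ζ - 1) * f η) :
    (nthRootsFinset 5 (1 : 𝓞 K) : Set (𝓞 K)).Pairwise (Function.onFun IsCoprime f) :=
  fun η hη θ hθ hne ↦ isCoprime_of_dvd_add_mul hζ (prime_sub_one hζ) hη hθ hne h.isCoprime
    (Dvd.intro_left _ (hf η hη).symm) (Dvd.intro_left _ (hf θ hθ).symm) fun ⟨hdη, hdθ⟩ ↦ by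
      obtain rfl | hη1 := eq_or_ne η 1
      · exact h.not_dvd_factor hζ hf hθ hne.symm hdθ
      · exact h.not_dvd_factor hζ hf hη hη1 hdη

theorem associated_prod_factor (hζ : IsPrimitiveRoot ζ 5) (h : RamifiedSolution s ζ X Y Z)
    (hf : ∀ η ∈ nthRootsFinset 5 1, X + η * Y = (ζ - 1) * f η) :
    Associated (∏ η ∈ nthRootsFinset 5 1, f η) (2 ^ s * Z ^ 5) := by
  have hprod := h.associated
  rw [hζ.pow_add_pow_eq_prod_add_mul _ _ (by decide), Finset.prod_congr rfl hf,
    Finset.prod_mul_distrib, Finset.prod_const, hζ.card_nthRootsFinset, mul_pow,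
    mul_left_comm] at hprod
  exact hprod.of_mul_left (Associated.refl _) (pow_ne_zero 5 (prime_sub_one hζ).ne_zero)

theorem exists_units_factor_mul_sub_factor_mul (hζ : IsPrimitiveRoot ζ 5)
    (hf : ∀ η ∈ nthRootsFinset 5 1, X + η * Y = (ζ - 1) * f η) (hη : η ∈ nthRootsFinset 5 1)
    (hη1 : η ≠ 1) (hθ : θ ∈ nthRootsFinset 5 1) (hθ1 : θ ≠ 1) (hne : η ≠ θ) :
    ∃ u v w : (𝓞 K)ˣ, f η * v - f θ * u = f 1 * w := by
  have hone : (1 : 𝓞 K) ∈ nthRootsFinset 5 1 := one_mem_nthRootsFinset (by norm_num)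
  have hassoc := hζ.nthRootsFinset_pairwise_associated_sub_one_sub_of_prime Nat.prime_five
  obtain ⟨u, hu⟩ := hassoc hη hone hη1
  obtain ⟨v, hv⟩ := hassoc hθ hone hθ1
  obtain ⟨w, hw⟩ := hassoc hθ hη hne.symm
  refine ⟨u, v, w, mul_left_cancel₀ (pow_ne_zero 2 (prime_sub_one hζ).ne_zero) ?_⟩
  linear_combination (ζ - 1) * f η * hv - (ζ - 1) * f θ * hu - (ζ - 1) * f 1 * hw
    - (θ - 1) * hf η hη + (η - 1) * hf θ hθ + (θ - η) * hf 1 hone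

theorem exists_associated_factor [IsPrincipalIdealRing (𝓞 K)] (hζ : IsPrimitiveRoot ζ 5)
    (hs : ¬ 5 ∣ s) (h : RamifiedSolution s ζ X Y Z)
    (hf : ∀ η ∈ nthRootsFinset 5 1, X + η * Y = (ζ - 1) * f η) :
    (∃ a, Associated (f 1) (2 ^ s * ((ζ - 1) * a) ^ 5)) ∧
      ∀ η ∈ nthRootsFinset 5 1, η ≠ 1 → ∃ a, Associated (f η) (a ^ 5) := by
  classical
  have hprime := prime_sub_one hζ
  have hone : (1 : 𝓞 K) ∈ nthRootsFinset 5 1 := one_mem_nthRootsFinset (by norm_num)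
  obtain ⟨j, hj, ⟨b, hb⟩, hrest⟩ := exists_associated_mul_pow_of_prod_of_isCoprime prime_two
    (fun hs0 ↦ hs (by simp [hs0])) (h.pairwise_isCoprime_factor hζ hf)
    (h.associated_prod_factor hζ hf)
  have hdvd := h.dvd_factor_one hζ hf
  obtain rfl | hj1 := eq_or_ne j 1
  · rw [hb.dvd_iff_dvd_right] at hdvd
    obtain ⟨a, rfl⟩ := hprime.dvd_of_dvd_pow <| (hprime.dvd_or_dvd hdvd).resolve_left
      fun h2 ↦ not_sub_one_dvd_two hζ (hprime.dvd_of_dvd_pow h2)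
    exact ⟨⟨a, hb⟩, hrest⟩
  -- Otherwise `(ζ - 1)⁵ ∣ f 1`, and the linear relation between `f 1`, `f j` and any third factor
  -- makes `2 ^ s` a fifth power modulo `(ζ - 1)⁵`, up to a unit.
  obtain ⟨a, ha⟩ := hrest 1 hone hj1.symm
  have hfive : (ζ - 1) ^ 5 ∣ f 1 := ha.dvd_iff_dvd_right.2 <|
    pow_dvd_pow_of_dvd (hprime.dvd_of_dvd_pow (ha.dvd_iff_dvd_right.1 hdvd)) 5
  obtain ⟨η, hη⟩ : (((nthRootsFinset 5 (1 : 𝓞 K)).erase 1).erase j).Nonempty := by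
    rw [← Finset.card_pos, Finset.card_erase_of_mem (Finset.mem_erase.2 ⟨hj1, hj⟩),
      Finset.card_erase_of_mem hone, hζ.card_nthRootsFinset]
    norm_num
  simp only [Finset.mem_erase] at hη
  obtain ⟨hηj, hη1, hη⟩ := hη
  obtain ⟨c, hc⟩ := hrest η hη hηj
  have hc' : ¬ ζ - 1 ∣ c := fun hdvd ↦
    h.not_dvd_factor hζ hf hη hη1 (hc.dvd_iff_dvd_right.2 (dvd_pow hdvd (by norm_num)))
  obtain ⟨u, v, w, huvw⟩ := exists_units_factor_mul_sub_factor_mul hζ hf hη hη1 hj hj1 hηj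
  obtain ⟨p, hp⟩ := hc.symm
  obtain ⟨q, hq⟩ := hb.symm
  refine (not_sub_one_pow_five_dvd_sub_two_pow_mul hζ hs (b := b) hc' (v * p) (u * q) ?_).elim
  convert hfive.mul_right (w : 𝓞 K) using 1
  push_cast
  linear_combination huvw + v * hp - u * hq

theorem exists_units_of_associated_factor [IsPrincipalIdealRing (𝓞 K)] (hζ : IsPrimitiveRoot ζ 5)
    (h : RamifiedSolution s ζ X Y Z)
    (hf : ∀ η ∈ nthRootsFinset 5 1, X + η * Y = (ζ - 1) * f η) (hη : η ∈ nthRootsFinset 5 1)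
    (hη1 : η ≠ 1) (hθ : θ ∈ nthRootsFinset 5 1) (hθ1 : θ ≠ 1) (hne : η ≠ θ) {a b c : 𝓞 K}
    (ha : Associated (f 1) (2 ^ s * ((ζ - 1) * a) ^ 5)) (hb : Associated (f η) (b ^ 5))
    (hc : Associated (f θ) (c ^ 5)) : ∃ t : (𝓞 K)ˣ, RamifiedSolution s ζ (t * b) (-c) a := by
  have hb' : ¬ ζ - 1 ∣ b := fun hdvd ↦
    h.not_dvd_factor hζ hf hη hη1 (hb.dvd_iff_dvd_right.2 (dvd_pow hdvd (by norm_num)))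
  have hcop := (h.pairwise_isCoprime_factor hζ hf hη hθ hne).of_isCoprime_of_dvd_left
    ((dvd_pow_self b (by norm_num)).trans hb.symm.dvd) |>.of_isCoprime_of_dvd_right
    ((dvd_pow_self c (by norm_num)).trans hc.symm.dvd)
  obtain ⟨u, v, w, huvw⟩ := exists_units_factor_mul_sub_factor_mul hζ hf hη hη1 hθ hθ1 hne
  obtain ⟨p, hp⟩ := hb.symm
  obtain ⟨q, hq⟩ := hc.symm
  have hcross : ((v * p : (𝓞 K)ˣ) : 𝓞 K) * b ^ 5 - (u * q : (𝓞 K)ˣ) * c ^ 5 = f 1 * w := by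
    push_cast
    linear_combination huvw + v * hp - u * hq
  have hthree : (ζ - 1) ^ 3 ∣ f 1 := by
    rw [ha.dvd_iff_dvd_right, mul_pow]
    exact ((pow_dvd_pow _ (by norm_num)).mul_right _).mul_left _
  obtain ⟨t, ht, htbc⟩ :=
    exists_units_eq_mul_pow_and_sq_dvd_sub hζ hb' (hcross ▸ hthree.mul_right (w : 𝓞 K))
  refine ⟨t, (isCoprime_mul_unit_left_left t.isUnit b _).2 hcop.neg_right, ?_,
    by simpa [sub_eq_add_neg] using htbc⟩
  refine Associated.trans (Associated.trans ⟨u * q, ?_⟩ ⟨w⁻¹, Units.mul_inv_cancel_right _ w⟩) ha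
  rw [ht] at hcross
  rw [← hcross]
  push_cast
  ring

theorem exists_descent [IsPrincipalIdealRing (𝓞 K)] (hζ : IsPrimitiveRoot ζ 5) (hs : ¬ 5 ∣ s)
    (h : RamifiedSolution s ζ X Y Z) :
    ∃ X' Y' Z', RamifiedSolution s ζ X' Y' Z' ∧ (ζ - 1) * Z' ∣ Z := by
  have hone : (1 : 𝓞 K) ∈ nthRootsFinset 5 1 := one_mem_nthRootsFinset (by norm_num)
  have hmem₁ : ζ ∈ nthRootsFinset 5 (1 : 𝓞 K) := hζ.mem_nthRootsFinset (by norm_num)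
  have hmem₄ := pow_mem_nthRootsFinset hζ 4
  have hne₁ : ζ ≠ 1 := hζ.ne_one (by norm_num)
  have hne₄ : ζ ^ 4 ≠ 1 := hζ.pow_ne_one_of_pos_of_lt (by norm_num) (by norm_num)
  have hne : ζ ≠ ζ ^ 4 := fun heq ↦ by
    have := hζ.pow_inj (by norm_num) (by norm_num) ((pow_one ζ).trans heq)
    norm_num at this
  obtain ⟨f, hf⟩ := exists_add_mul_eq_sub_one_mul hζ
    ((dvd_pow_self _ two_ne_zero).trans h.sq_dvd_add)
  obtain ⟨⟨a, ha⟩, hrest⟩ := h.exists_associated_factor hζ hs hf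
  obtain ⟨b, hb⟩ := hrest ζ hmem₁ hne₁
  obtain ⟨c, hc⟩ := hrest (ζ ^ 4) hmem₄ hne₄
  obtain ⟨t, ht⟩ :=
    h.exists_units_of_associated_factor hζ hf hmem₁ hne₁ hmem₄ hne₄ hne ha hb hc
  refine ⟨_, _, a, ht, ?_⟩
  have hdvd := ha.symm.dvd.trans ((Finset.dvd_prod_of_mem f hone).trans
    (h.associated_prod_factor hζ hf).dvd)
  rw [mul_dvd_mul_iff_left (pow_ne_zero s prime_two.ne_zero)] at hdvd
  exact (IsIntegrallyClosed.pow_dvd_pow_iff (by norm_num)).1 hdvd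

theorem eq_zero [IsPrincipalIdealRing (𝓞 K)] (hζ : IsPrimitiveRoot ζ 5) (hs : ¬ 5 ∣ s)
    (h : RamifiedSolution s ζ X Y Z) : Z = 0 := by
  have hdvd : ∀ (n : ℕ) {X Y Z : 𝓞 K}, RamifiedSolution s ζ X Y Z → (ζ - 1) ^ n ∣ Z := by
    intro n
    induction n with
    | zero => simp
    | succ n ih =>
      intro X Y Z h
      obtain ⟨X', Y', Z', h', hZ⟩ := h.exists_descent hζ hs
      exact (pow_succ' (ζ - 1) n ▸ mul_dvd_mul_left _ (ih h')).trans hZ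
  by_contra hne
  obtain ⟨n, hn⟩ := FiniteMultiplicity.of_not_isUnit (prime_sub_one hζ).not_isUnit hne
  exact hn (hdvd (n + 1) h)

end RamifiedSolution

theorem eq_zero_of_associated_pow_add_pow {K : Type*} [Field K] [NumberField K]
    [IsCyclotomicExtension {5} ℚ K] [IsPrincipalIdealRing (𝓞 K)] {s : ℕ} {ζ X Y Z : 𝓞 K}
    (hζ : IsPrimitiveRoot ζ 5) (hs : ¬ 5 ∣ s) (hXY : IsCoprime X Y)
    (h : Associated (X ^ 5 + Y ^ 5) (2 ^ s * ((ζ - 1) * Z) ^ 5)) : Z = 0 := by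
  have hprime := prime_sub_one hζ
  have hdvd : ζ - 1 ∣ X ^ 5 - (-Y) ^ 5 := by
    rw [Odd.neg_pow (by decide), sub_neg_eq_add, h.dvd_iff_dvd_right]
    exact (dvd_pow (dvd_mul_right _ _) (by norm_num)).mul_left _
  have hsub := sub_one_dvd_sub_of_dvd_pow_sub_pow hζ hprime hdvd
  have hY : ¬ ζ - 1 ∣ -Y := fun hY ↦ hprime.not_isUnit <|
    hXY.neg_right.isUnit_of_dvd' ((dvd_iff_dvd_of_dvd_sub hsub).2 hY) hY
  obtain ⟨k, hk⟩ := exists_sub_one_sq_dvd_sub_pow_mul hζ hY hdvd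
  refine RamifiedSolution.eq_zero (X := X) (Y := ζ ^ k * Y) hζ hs ⟨?_, ?_, by simpa using hk⟩
  · exact (isCoprime_mul_unit_left_right ((hζ.isUnit (by norm_num)).pow k) X Y).2 hXY
  · rwa [mul_pow, ← pow_mul, mul_comm k, pow_mul, hζ.pow_eq_one, one_pow, one_mul]

section IntegralCoordinates

variable {K : Type*} [Field K] [NumberField K]

theorem dvd_sub_of_dvd_sum_mul_pow {p : ℕ} [hp : Fact p.Prime] [IsCyclotomicExtension {p} ℚ K]
    {ζ : 𝓞 K} (hζ : IsPrimitiveRoot ζ p) {m : ℤ} {a : Fin p → ℤ}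
    (h : (m : 𝓞 K) ∣ ∑ i, a i * ζ ^ (i : ℕ)) (i j : Fin p) : m ∣ a i - a j := by
  obtain ⟨q, rfl⟩ := Nat.exists_eq_succ_of_ne_zero hp.out.ne_zero
  suffices hlast : ∀ i, m ∣ a i - a (Fin.last q) by simpa using dvd_sub (hlast i) (hlast j)
  let B := (isPrimitiveRoot_coe hζ).integralPowerBasis
  have hdim : B.dim = q := by
    rw [IsPrimitiveRoot.integralPowerBasis_dim, Nat.totient_prime hp.out, Nat.succ_sub_one]
  let b := B.basis.reindex (finCongr hdim)
  have hb (i : Fin q) : b i = ζ ^ (i : ℕ) := by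
    rw [Module.Basis.reindex_apply, B.coe_basis, IsPrimitiveRoot.integralPowerBasis_gen]
    rfl
  have hgeom : ∑ i : Fin (q + 1), ζ ^ (i : ℕ) = 0 := by
    rw [← Finset.sum_range fun i ↦ ζ ^ i]
    exact hζ.geom_sum_eq_zero hp.out.one_lt
  have hsum : ∑ i, (a i : 𝓞 K) * ζ ^ (i : ℕ) =
      ∑ i : Fin q, (a i.castSucc - a (Fin.last q)) • b i := by
    simp only [Fin.sum_univ_castSucc, Fin.val_castSucc, Fin.val_last] at hgeom ⊢
    simp only [hb, zsmul_eq_mul, Int.cast_sub, sub_mul, Finset.sum_sub_distrib, ← Finset.mul_sum]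
    linear_combination (a (Fin.last q) : 𝓞 K) * hgeom
  refine Fin.lastCases (by simp) fun k ↦ ?_
  obtain ⟨y, hy⟩ := h
  rw [hsum, ← zsmul_eq_mul] at hy
  have hcoord := b.dvd_coord_smul k y m
  rwa [← hy, b.coord_apply, b.repr_sum_self] at hcoord

variable [IsCyclotomicExtension {5} ℚ K] {ζ : 𝓞 K}

theorem exists_five_dvd_pow_mul_sub (hζ : IsPrimitiveRoot ζ 5) (ε : (𝓞 K)ˣ) (α : 𝓞 K) :
    ∃ c < 5, ∃ P Q : ℤ, (5 : 𝓞 K) ∣ ζ ^ c * (ε * α ^ 5) - (P + Q * goldenUnit hζ) := by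
  obtain ⟨τ, w, b, hτ, rfl⟩ := exists_units_eq_mul_goldenUnit_pow_mul_pow hζ ε
  obtain ⟨c, hc, hζτ⟩ : ∃ c < 5, ζ ^ c = (τ⁻¹ : (𝓞 K)ˣ) := hζ.eq_pow_of_pow_eq_one (by
    rw [← Units.val_pow_eq_pow_val, inv_pow, hτ, inv_one, Units.val_one])
  obtain ⟨F, G, hFG⟩ := exists_goldenUnit_pow_eq hζ b
  obtain ⟨n, hn, -⟩ := exists_intCast_sub_one_pow_dvd_pow_sub hζ (w * α)
  refine ⟨c, hc, F * n ^ 5, G * n ^ 5, (associated_sub_one_pow hζ).symm.dvd.trans <|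
    (pow_dvd_pow (ζ - 1) (by norm_num : 4 ≤ 5)).trans ?_⟩
  convert hn.mul_left ((goldenUnit hζ ^ b : (𝓞 K)ˣ) : 𝓞 K) using 1
  rw [hζτ]
  push_cast at hFG ⊢
  linear_combination
    ((goldenUnit hζ : 𝓞 K) ^ b * w ^ 5 * α ^ 5) * τ.inv_mul + (n : 𝓞 K) ^ 5 * hFG

theorem five_dvd_of_add_mul_eq_mul_pow (hζ : IsPrimitiveRoot ζ 5) {U V : ℤ} {ε : (𝓞 K)ˣ}
    {α : 𝓞 K} (h : U + ζ * V = ε * α ^ 5) : (5 : ℤ) ∣ U ∨ (5 : ℤ) ∣ V ∨ (5 : ℤ) ∣ U - V := by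
  obtain ⟨c, hc, P, Q, hPQ⟩ := exists_five_dvd_pow_mul_sub hζ ε α
  rw [← h, coe_goldenUnit] at hPQ
  have hcoeff (a₀ a₁ a₂ a₃ a₄ : ℤ) (ha : a₀ + a₁ * ζ + a₂ * ζ ^ 2 + a₃ * ζ ^ 3 + a₄ * ζ ^ 4 =
      ζ ^ c * (U + ζ * V) - (P + Q * (ζ ^ 2 + ζ ^ 3))) :
      (5 : ℤ) ∣ a₁ - a₄ ∧ (5 : ℤ) ∣ a₂ - a₃ := by
    have hdvd : ((5 : ℤ) : 𝓞 K) ∣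
        ∑ i, (![a₀, a₁, a₂, a₃, a₄] i : 𝓞 K) * ζ ^ (i : ℕ) := by
      rw [← ha] at hPQ
      simpa [Fin.sum_univ_five] using hPQ
    exact ⟨dvd_sub_of_dvd_sum_mul_pow hζ hdvd 1 4, dvd_sub_of_dvd_sum_mul_pow hζ hdvd 2 3⟩
  have hζ5 := hζ.pow_eq_one
  interval_cases c
  · have := (hcoeff (U - P) V (-Q) (-Q) 0 (by push_cast; ring)).1
    simp_all
  · have := (hcoeff (-P) U (V - Q) (-Q) 0 (by push_cast; ring)).1
    simp_all
  · have := (hcoeff (-P) 0 (U - Q) (V - Q) 0 (by push_cast; ring)).2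
    simp_all
  · have := (hcoeff (-P) 0 (-Q) (U - Q) V (by push_cast; ring)).1
    simp_all
  · have := (hcoeff (V - P) 0 (-Q) (-Q) U (by push_cast; linear_combination -V * hζ5)).1
    simp_all

end IntegralCoordinates

section IntegerSolutions

variable {K : Type*} [Field K] [NumberField K] [IsCyclotomicExtension {5} ℚ K]
  [IsPrincipalIdealRing (𝓞 K)] {ζ : 𝓞 K} {s : ℕ} {X Y Z : ℤ}

theorem eq_zero_of_five_dvd (hζ : IsPrimitiveRoot ζ 5) (hs : ¬ 5 ∣ s) (hXY : IsCoprime X Y)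
    (h : X ^ 5 + Y ^ 5 = 2 ^ s * Z ^ 5) (hZ : (5 : ℤ) ∣ Z) : Z = 0 := by
  obtain ⟨z, hz⟩ := (sub_one_dvd_intCast_iff hζ).2 hZ
  have hK : (X : 𝓞 K) ^ 5 + (Y : 𝓞 K) ^ 5 = 2 ^ s * ((ζ - 1) * z) ^ 5 := by
    rw [← hz]
    exact_mod_cast h
  have hz0 := eq_zero_of_associated_pow_add_pow hζ hs hXY.intCast (.of_eq hK)
  rw [hz0, mul_zero] at hz
  exact_mod_cast hz

theorem five_dvd_or_five_dvd_sub_of_not_five_dvd (hζ : IsPrimitiveRoot ζ 5) (hs : s ≠ 0)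
    (hXY : IsCoprime X Y) (h : X ^ 5 + Y ^ 5 = 2 ^ s * Z ^ 5) (hZ : ¬ (5 : ℤ) ∣ Z) :
    (5 : ℤ) ∣ X ∨ (5 : ℤ) ∣ Y ∨ (5 : ℤ) ∣ X - Y := by
  have hprime := prime_sub_one hζ
  have hone : (1 : 𝓞 K) ∈ nthRootsFinset 5 1 := one_mem_nthRootsFinset (by norm_num)
  have hmem : ζ ∈ nthRootsFinset 5 (1 : 𝓞 K) := hζ.mem_nthRootsFinset (by norm_num)
  have hprod : ∏ η ∈ nthRootsFinset 5 1, ((X : 𝓞 K) + η * Y) = 2 ^ s * (Z : 𝓞 K) ^ 5 := by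
    rw [← hζ.pow_add_pow_eq_prod_add_mul _ _ (by decide)]
    exact_mod_cast h
  have hdvd : ∀ η ∈ nthRootsFinset 5 (1 : 𝓞 K), ¬ ζ - 1 ∣ X + η * Y := fun η hη hdvd ↦ by
    have hdvd_prod := hdvd.trans (Finset.dvd_prod_of_mem (fun η ↦ (X : 𝓞 K) + η * Y) hη)
    rw [hprod] at hdvd_prod
    obtain h2 | hZ5 := hprime.dvd_or_dvd hdvd_prod
    · exact not_sub_one_dvd_two hζ (hprime.dvd_of_dvd_pow h2)
    · exact hZ ((sub_one_dvd_intCast_iff hζ).1 (hprime.dvd_of_dvd_pow hZ5))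
  have hcop : (nthRootsFinset 5 (1 : 𝓞 K) : Set (𝓞 K)).Pairwise
      (Function.onFun IsCoprime fun η ↦ (X : 𝓞 K) + η * Y) := fun η hη θ hθ hne ↦
    isCoprime_of_dvd_add_mul hζ hprime hη hθ hne hXY.intCast dvd_rfl dvd_rfl
      fun h' ↦ hdvd η hη h'.1
  obtain ⟨j, hj, ⟨b, hb⟩, hrest⟩ :=
    exists_associated_mul_pow_of_prod_of_isCoprime prime_two hs hcop (.of_eq hprod)
  have htwo : (2 : 𝓞 K) ∣ X + 1 * Y := by
    have hpow : (2 : ℤ) ∣ X ^ 5 + Y ^ 5 := h ▸ (dvd_pow_self 2 hs).mul_right _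
    have hadd : (2 : ℤ) ∣ X + Y := by
      simpa [← even_iff_two_dvd, Int.even_add, Int.even_pow] using hpow
    simpa using (Int.cast_dvd_cast (α := 𝓞 K) _ _ hadd)
  have hjζ : ζ ≠ j := by
    rintro rfl
    refine prime_two.not_isUnit ((hcop hone hj (hζ.ne_one (by norm_num)).symm).isUnit_of_dvd'
      htwo (hb.dvd_iff_dvd_right.2 ((dvd_pow_self 2 hs).mul_right _)))
  obtain ⟨a, ha⟩ := hrest ζ hmem hjζ
  obtain ⟨e, he⟩ := ha.symm
  exact five_dvd_of_add_mul_eq_mul_pow hζ (he.symm.trans (mul_comm _ _))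

theorem not_five_dvd_left (hs : ¬ 5 ∣ s) (hXY : IsCoprime X Y)
    (h : X ^ 5 + Y ^ 5 = 2 ^ s * Z ^ 5) : ¬ (5 : ℤ) ∣ X := fun hX ↦ by
  have hY : ¬ (5 : ℤ) ∣ Y := fun hY ↦ by
    have := hXY.isUnit_of_dvd' hX hY
    norm_num [Int.isUnit_iff] at this
  refine hs (five_dvd_of_dvd_two_pow_mul_pow_sub_pow (m := Z) hY ?_)
  rw [← h, add_sub_cancel_right]
  exact (show (25 : ℤ) ∣ 5 ^ 5 by norm_num).trans (pow_dvd_pow_of_dvd hX 5)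

theorem eq_of_five_dvd_sub (hζ : IsPrimitiveRoot ζ 5) (hs : s ≠ 0) (hXY : IsCoprime X Y)
    (h : X ^ 5 + Y ^ 5 = 2 ^ s * Z ^ 5) (hsub : (5 : ℤ) ∣ X - Y) : X = Y := by
  obtain ⟨r, rfl⟩ := Nat.exists_eq_add_one_of_ne_zero hs
  have hY : ¬ (5 : ℤ) ∣ Y := fun hY ↦ by
    have := hXY.isUnit_of_dvd' ((dvd_iff_dvd_of_dvd_sub hsub).2 hY) hY
    norm_num [Int.isUnit_iff] at this
  have hpow : (25 : ℤ) ∣ X ^ 5 - Y ^ 5 := by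
    have := dvd_sub_pow_of_dvd_sub (p := 5) (by exact_mod_cast hsub) 1
    norm_num at this
    exact this
  have htwo : X ^ 5 - Y ^ 5 = 2 * (2 ^ r * Z ^ 5 - Y ^ 5) := by linear_combination h
  have hmod : (25 : ℤ) ∣ 2 ^ r * Z ^ 5 - Y ^ 5 :=
    IsCoprime.dvd_of_dvd_mul_left (by norm_num : IsCoprime (25 : ℤ) 2) (htwo ▸ hpow)
  obtain ⟨t, rfl⟩ := five_dvd_of_dvd_two_pow_mul_pow_sub_pow hY hmod
  have hK : (X : 𝓞 K) ^ 5 + (Y : 𝓞 K) ^ 5 = 2 * (2 ^ t * Z) ^ 5 := by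
    rw [mul_pow, ← pow_mul, mul_comm t, ← mul_assoc, ← pow_succ']
    exact_mod_cast h
  have hsq : (ζ - 1) ^ 2 ∣ (X : 𝓞 K) - Y := by
    simpa using (pow_dvd_pow (ζ - 1) (by norm_num : 2 ≤ 4)).trans
      (sub_one_pow_four_dvd_intCast hζ hsub)
  exact_mod_cast DiagonalSolution.eq hζ ⟨hXY.intCast, hK, hsq⟩

end IntegerSolutions

theorem eq_zero_or_eq_of_pow_five_add_pow_five {s : ℕ} {X Y Z : ℤ} (hs : ¬ 5 ∣ s)
    (hXY : IsCoprime X Y) (h : X ^ 5 + Y ^ 5 = 2 ^ s * Z ^ 5) : Z = 0 ∨ X = Y := by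
  have : IsCyclotomicExtension {5} ℚ (CyclotomicField 5 ℚ) := by
    convert! CyclotomicField.isCyclotomicExtension 5 ℚ
  have : NumberField (CyclotomicField 5 ℚ) := IsCyclotomicExtension.numberField {5} ℚ _
  have : IsPrincipalIdealRing (𝓞 (CyclotomicField 5 ℚ)) := IsCyclotomicExtension.Rat.five_pid _
  have hζ := (IsCyclotomicExtension.zeta_spec 5 ℚ (CyclotomicField 5 ℚ)).toInteger_isPrimitiveRoot
  have hs0 : s ≠ 0 := by
    rintro rfl
    simp at hs
  by_cases hZ : (5 : ℤ) ∣ Z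
  · exact .inl (eq_zero_of_five_dvd hζ hs hXY h hZ)
  · obtain hX | hY | hsub := five_dvd_or_five_dvd_sub_of_not_five_dvd hζ hs0 hXY h hZ
    · exact absurd hX (not_five_dvd_left hs hXY h)
    · exact absurd hY (not_five_dvd_left hs hXY.symm (by rw [add_comm, h]))
    · exact .inr (eq_of_five_dvd_sub hζ hs0 hXY h hsub)

theorem exists_eq_sq_mul_of_add_eq_zero {R : Type*} [CommRing R] [IsDomain R] {b c e k : R}
    (he : e ≠ 0) (h : c * e ^ 2 + b + k * e * b ^ 3 = 0) :
    ∃ g, b = e ^ 2 * g ∧ c + g + k * e ^ 5 * g ^ 3 = 0 := by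
  obtain ⟨f, rfl⟩ : e ∣ b := ⟨-(c * e + k * b ^ 3), by linear_combination h⟩
  have hf : c * e + f + k * e ^ 3 * f ^ 3 = 0 :=
    mul_left_cancel₀ he (by linear_combination h)
  obtain ⟨g, rfl⟩ : e ∣ f := ⟨-(c + k * e ^ 2 * f ^ 3), by linear_combination hf⟩
  exact ⟨g, by ring, mul_left_cancel₀ he (by linear_combination hf)⟩

theorem eq_neg_one_and_eq_of_isCoprime {a b e : ℤ} (hab : IsCoprime a b) (he : e ≠ 0)
    (h : a ^ 5 * e ^ 2 + b + 2 * e * b ^ 3 = 0) : e = -1 ∧ a = b := by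
  obtain ⟨g, rfl, hg⟩ := exists_eq_sq_mul_of_add_eq_zero he h
  have hgu : IsUnit g := (hab.pow_left (m := 5)).isUnit_of_dvd'
    ⟨-(1 + 2 * e ^ 5 * g ^ 2), by linear_combination hg⟩ (dvd_mul_left _ _)
  have hg2 : g ^ 2 = 1 := by rw [sq, Int.isUnit_mul_self hgu]
  have hfive : a ^ 5 + g ^ 5 = 2 ^ 1 * (-(e * g)) ^ 5 := by
    linear_combination hg + (g * (g ^ 2 + 1) + 2 * e ^ 5 * g ^ 3) * hg2
  have hag : IsCoprime a g := ⟨0, g, by linear_combination hg2⟩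
  obtain heg | rfl := eq_zero_or_eq_of_pow_five_add_pow_five (by norm_num) hag hfive
  · exact absurd (neg_eq_zero.1 heg) (mul_ne_zero he hgu.ne_zero)
  · have he5 : e ^ 5 = (-1) ^ 5 := mul_left_cancel₀
      (mul_ne_zero two_ne_zero (pow_ne_zero 5 hgu.ne_zero)) (by linear_combination hfive)
    obtain rfl : e = -1 := (Odd.strictMono_pow (by decide : Odd 5)).injective he5
    exact ⟨rfl, by ring⟩

theorem eq_zero_of_isCoprime_two_mul {a b e : ℤ} (hab : IsCoprime (2 * a) b) (he : e ≠ 0)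
    (h : 8 * a ^ 5 * e ^ 2 + b + e * b ^ 3 = 0) : a = 0 := by
  obtain ⟨g, rfl, hg⟩ :=
    exists_eq_sq_mul_of_add_eq_zero (b := b) (c := 8 * a ^ 5) (k := 1) he (by linear_combination h)
  have hgu : IsUnit g := (hab.pow_left (m := 5)).isUnit_of_dvd'
    ⟨-(4 + 4 * e ^ 5 * g ^ 2), by linear_combination 4 * hg⟩ (dvd_mul_left _ _)
  have hg2 : g ^ 2 = 1 := by rw [sq, Int.isUnit_mul_self hgu]
  have hfive : (e * g) ^ 5 + g ^ 5 = 2 ^ 3 * (-a) ^ 5 := by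
    linear_combination hg + (g * (g ^ 2 + 1) + e ^ 5 * g ^ 3) * hg2
  have hegg : IsCoprime (e * g) g := ⟨0, g, by linear_combination hg2⟩
  obtain ha | heg := eq_zero_or_eq_of_pow_five_add_pow_five (by norm_num) hegg hfive
  · exact neg_eq_zero.1 ha
  · rw [heg] at hfive
    obtain rfl | rfl := Int.isUnit_iff.1 hgu <;> omega

theorem exists_isCoprime_of_ne_zero {x y : ℤ} (hx : x ≠ 0)
    (h : x ^ 4 + x * y + 2 * y ^ 3 = 0) : ∃ a b e : ℤ, a ≠ 0 ∧ e ≠ 0 ∧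
      (IsCoprime a b ∧ x = a ^ 2 * e ∧ y = a * e * b ∧ a ^ 5 * e ^ 2 + b + 2 * e * b ^ 3 = 0 ∨
        IsCoprime (2 * a) b ∧ 8 * a ^ 5 * e ^ 2 + b + e * b ^ 3 = 0) := by
  obtain ⟨a, b, hab, hxa, hyb⟩ := Int.exists_gcd_one (Int.gcd_pos_of_ne_zero_left y hx)
  rw [← Int.isCoprime_iff_gcd_eq_one] at hab
  obtain ⟨d, hd_def⟩ : ∃ d : ℤ, Int.gcd x y = d := ⟨_, rfl⟩
  rw [hd_def] at hxa hyb
  have ha : a ≠ 0 := left_ne_zero_of_mul (hxa ▸ hx)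
  have hd : d ≠ 0 := right_ne_zero_of_mul (hxa ▸ hx)
  have hred : d ^ 2 * a ^ 4 + a * b + 2 * d * b ^ 3 = 0 := by
    rw [hxa, hyb] at h
    exact mul_left_cancel₀ (pow_ne_zero 2 hd) (by linear_combination h)
  have hadvd : a ∣ 2 * d := hab.pow_right.dvd_of_dvd_mul_right
    (⟨-(d ^ 2 * a ^ 3 + b), by linear_combination hred⟩ : a ∣ (2 * d) * b ^ 3)
  obtain ⟨c, rfl | rfl⟩ := Int.even_or_odd' a
  · obtain ⟨e, rfl⟩ := (mul_dvd_mul_iff_left two_ne_zero).1 hadvd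
    exact ⟨c, b, e, right_ne_zero_of_mul ha, right_ne_zero_of_mul hd,
      .inr ⟨hab, mul_left_cancel₀ ha (by linear_combination hred)⟩⟩
  · have htwo : IsCoprime (2 * c + 1) 2 := ⟨1, -c, by ring⟩
    obtain ⟨e, rfl⟩ := htwo.dvd_of_dvd_mul_left hadvd
    exact ⟨2 * c + 1, b, e, ha, right_ne_zero_of_mul hd, .inl ⟨hab, by rw [hxa]; ring,
      by rw [hyb]; ring, mul_left_cancel₀ ha (by linear_combination hred)⟩⟩

end QuinticCyclotomic

theorem stmt_6 (x y : ℤ) :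
    x ^ 4 + x * y + 2 * y ^ 3 = 0 ↔ (x = 0 ∧ y = 0) ∨ (x = -1 ∧ y = -1) := by
  constructor
  · intro h
    obtain rfl | hx := eq_or_ne x 0
    · exact .inl ⟨rfl, by simpa using h⟩
    obtain ⟨a, b, e, ha, he, ⟨hab, rfl, rfl, heq⟩ | ⟨hab, heq⟩⟩ :=
      QuinticCyclotomic.exists_isCoprime_of_ne_zero hx h
    · obtain ⟨rfl, rfl⟩ := QuinticCyclotomic.eq_neg_one_and_eq_of_isCoprime hab he heq
      have ha2 : a * a = 1 := Int.isUnit_mul_self (isCoprime_self.1 hab)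
      exact .inr ⟨by linear_combination -ha2, by linear_combination -ha2⟩
    · exact absurd (QuinticCyclotomic.eq_zero_of_isCoprime_two_mul hab he heq) ha
  · rintro (⟨rfl, rfl⟩ | ⟨rfl, rfl⟩) <;> norm_num
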